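/- Let λ ∈ 𝕋, n ∈ ℕ, and f holomorphic on 𝔻. Then the local Dirichlet-type integral D_{λ,n}(f) := (1/(n!(n-1)!)) ∫_𝔻 |f^{(n)}(z)|² ((1-|z|²)/|z-λ|²)(1-|z|²)^{n-1} dA(z) is finite if and only if f = α + (z-λ)g for some α ∈ ℂ and some g holomorphic on 𝔻 with D_{σ,n-1}(g) < ∞; moreover in that case D_{λ,n}(f) = D_{σ,n-1}(g). -/

import Mathlib

/-!
The proof works with Taylor coefficients, with `n = m + 1`.

Area side. The weight `1 / |z - λ|²` is absorbed into the holomorphic function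
`F = f⁽ⁿ⁾ / (z - λ)`; Parseval on circles and a beta integral (`area_parseval`) give
`D_{λ,n}(f) = (1/m!) ∑ N! / (N+n+1)! |F_N|²`.

Coefficient side. If `f = α + (z - λ) g`, put `u_k = λ^{k+n} b_{k+m} (k+m)! / k!` (the Taylor
coefficients of `g⁽ᵐ⁾`, rotated by unimodular factors) and `T_N = u_0 + ⋯ + u_N`. Then
`λ^{N+n+1} F_N = (N+1) u_{N+1} - n T_N` (`coeff_quot`), and
`D_{σ,m}(g) = (1/m!) ∑ k! / (k+m)! |u_k|²`. Expanding `|F_N|²` produces a telescoping sum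
(`partial_identity`): the two partial sums differ by the boundary term `n M!/(M+n)! |T_M|²`.

* If `D_{σ,m}(g) < ∞`, the boundary term tends to `0` by Cauchy–Schwarz (`boundary_tendsto`),
  whence the equality.
* If `D_{λ,n}(f) < ∞`, start from `α = 0`. Replacing `α` by another constant shifts the sequence
  `R_N = N!/(N+n)! T_N` by a constant, leaving the `F_N` unchanged. Since
  `R_{N+1} - R_N = N!/(N+n+1)! F_N` (up to unimodular factors), `R_N` converges by
  Cauchy–Schwarz, and the `α` for which the limit vanishes keeps the boundary term bounded
  (`exists_shift`).
-/

open MeasureTheory Metric Complex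
open scoped ENNReal NNReal

/-- The normalized Lebesgue area measure on ℂ (so the unit disc has mass 1). -/
noncomputable def nA : Measure ℂ := (ENNReal.ofReal Real.pi)⁻¹ • volume

/-- Taylor coefficient of `f` at the origin. -/
noncomputable def coeff (f : ℂ → ℂ) (k : ℕ) : ℂ := iteratedDeriv k f 0 / (k.factorial : ℂ)

/-- `D_{σ,m}(f) = Σ_{k} C(k,m) |a_k|²` via the Taylor coefficients `a_k` of `f`. -/
noncomputable def Dsig (m : ℕ) (f : ℂ → ℂ) : ℝ≥0∞ :=
  ∑' k : ℕ, (k.choose m : ℝ≥0∞) * (‖coeff f k‖₊ : ℝ≥0∞) ^ 2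

/-- The local Dirichlet-type integral of order `n` at `λ ∈ 𝕋`:
`D_{λ,n}(f) = (1/(n!(n-1)!)) ∫_𝔻 |f⁽ⁿ⁾(z)|² ((1-|z|²)/|z-λ|²)(1-|z|²)^{n-1} dA(z)`. -/
noncomputable def Dloc (lam : ℂ) (n : ℕ) (f : ℂ → ℂ) : ℝ≥0∞ :=
  ENNReal.ofReal (1 / ((n.factorial : ℝ) * ((n-1).factorial : ℝ))) *
    ∫⁻ z in ball (0:ℂ) 1, (‖iteratedDeriv n f z‖₊ : ℝ≥0∞) ^ 2 *
      ENNReal.ofReal (((1 - ‖z‖^2) / ‖z - lam‖^2) * (1 - ‖z‖^2)^(n-1)) ∂nA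

/-! ### The weights and the telescoping identity -/

/-- The weight `N! / (N + n)!`, of order `N⁻ⁿ`. -/
noncomputable def cw (n N : ℕ) : ℝ := (N.factorial : ℝ) / (N + n).factorial

lemma cw_pos (n N : ℕ) : 0 < cw n N := by
  have := N.factorial_pos
  have := (N + n).factorial_pos
  unfold cw; positivity

lemma cw_succ_left (n N : ℕ) : ((N:ℝ) + n + 1) * cw (n + 1) N = cw n N := by
  have := (N + n).factorial_pos
  unfold cw
  rw [← add_assoc, Nat.factorial_succ]; push_cast; field_simp

lemma cw_succ_right (n N : ℕ) : ((N:ℝ) + 1) * cw (n + 1) N = cw n (N + 1) := by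
  have := (N + n + 1).factorial_pos
  unfold cw
  rw [show N + 1 + n = N + n + 1 by ring, show N + (n + 1) = N + n + 1 by ring, N.factorial_succ]
  push_cast; ring

lemma cw_diff (n N : ℕ) : cw n N - cw n (N + 1) = n * cw (n + 1) N := by
  rw [← cw_succ_left, ← cw_succ_right]; ring

/-- Partial sum `u_0 + ⋯ + u_N` (inclusive of `N`). -/
noncomputable def pT (u : ℕ → ℂ) (N : ℕ) : ℂ := ∑ k ∈ Finset.range (N + 1), u k

/-- The `N`-th Taylor coefficient of `U' + n U / (z - 1)` where
`U = ∑ u_k z^k`; the sequence `pT u` gives the coefficients of `U / (1 - z)`. -/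
noncomputable def pF (n : ℕ) (u : ℕ → ℂ) (N : ℕ) : ℂ := (N + 1) * u (N + 1) - n * pT u N

lemma pT_succ (u : ℕ → ℂ) (N : ℕ) : pT u (N + 1) = pT u N + u (N + 1) := by
  rw [pT, Finset.sum_range_succ, pT]

/-- One step of the telescoping: the cross term `Re (u_{N+1} conj T_N)` of `|F_N|²` is
eliminated through `|T_{N+1}|² = |T_N + u_{N+1}|²`. -/
lemma step (n : ℕ) (u : ℕ → ℂ) (N : ℕ) :
    cw (n + 1) N * ‖pF n u N‖ ^ 2 = ((N:ℝ) + 1) * ((N:ℝ) + 1 + n) * cw (n + 1) N * ‖u (N + 1)‖ ^ 2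
      + n * cw n N * ‖pT u N‖ ^ 2 - n * cw n (N + 1) * ‖pT u (N + 1)‖ ^ 2 := by
  rw [← cw_succ_left n, ← cw_succ_right n, pT_succ, pF]
  generalize pT u N = a
  generalize u (N + 1) = b
  have : ((N:ℂ) + 1) * b - n * a = (((N:ℝ) + 1 : ℝ) : ℂ) * b - ((n:ℝ):ℂ) * a := by push_cast; ring
  rw [this]
  simp only [← Complex.normSq_eq_norm_sq, Complex.normSq_apply]
  simp
  ring

/-- The two weighted `ℓ²` partial sums agree up to a nonnegative boundary term. -/
lemma partial_identity (m : ℕ) (u : ℕ → ℂ) (M : ℕ) :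
    ∑ N ∈ Finset.range M, cw (m + 2) N * ‖pF (m + 1) u N‖ ^ 2
      + (m + 1) * cw (m + 1) M * ‖pT u M‖ ^ 2
      = ∑ k ∈ Finset.range (M + 1), cw m k * ‖u k‖ ^ 2 := by
  induction M with
  | zero =>
    have h := cw_succ_left m 0
    simp only [Nat.cast_zero, zero_add] at h
    simp [pT, h]
  | succ M ih =>
    rw [Finset.sum_range_succ _ (M + 1), ← ih, Finset.sum_range_succ, step, ← cw_succ_right m,
      ← cw_succ_left (m + 1)]
    push_cast
    ring

/-- The hockey-stick identity, in terms of the weights. -/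
lemma sum_inv_cw (m M : ℕ) :
    ∑ k ∈ Finset.range (M + 1), (cw m k)⁻¹ = ((m + 1) * cw (m + 1) M)⁻¹ := by
  induction M with
  | zero =>
    have h := cw_succ_left m 0
    simp at h ⊢
    rw [← h]; simp [mul_comm]
  | succ M ih =>
    rw [Finset.sum_range_succ, ih, ← cw_succ_right m, ← cw_succ_right (m + 1), ← cw_succ_left (m+1) M]
    have := cw_pos (m + 1 + 1) M
    push_cast
    field_simp
    ring

lemma cw_tendsto (n : ℕ) : Filter.Tendsto (cw (n + 1)) Filter.atTop (nhds 0) := by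
  refine squeeze_zero (fun N => (cw_pos _ _).le) (fun N => ?_)
    (tendsto_one_div_add_atTop_nhds_zero_nat (𝕜 := ℝ))
  have h := cw_succ_left n N
  have h1 : cw n N ≤ 1 := by
    unfold cw
    rw [div_le_one (by exact_mod_cast (N + n).factorial_pos)]
    exact_mod_cast Nat.factorial_le (Nat.le_add_right N n)
  rw [le_div_iff₀ (by positivity)]
  have := cw_pos (n + 1) N
  nlinarith [mul_nonneg (Nat.cast_nonneg (α := ℝ) n) this.le]

/-! ### Convergence of the weighted sums -/

lemma summable_cw (n : ℕ) : Summable (cw (n + 2)) := by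
  refine summable_of_sum_range_le (c := cw (n + 1) 0) (fun N => (cw_pos _ _).le) fun M => ?_
  have : ∀ M, (n + 1 : ℝ) * ∑ N ∈ Finset.range M, cw (n + 2) N = cw (n + 1) 0 - cw (n + 1) M := by
    intro M
    rw [Finset.mul_sum, ← Finset.sum_range_sub']
    refine Finset.sum_congr rfl fun N _ => ?_
    rw [cw_diff]; push_cast; ring
  have h := this M
  have h1 := cw_pos (n + 1) M
  have h2 : 0 ≤ ∑ N ∈ Finset.range M, cw (n + 2) N := Finset.sum_nonneg fun _ _ => (cw_pos _ _).le
  nlinarith [mul_nonneg (Nat.cast_nonneg (α := ℝ) n) h2]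

/-- The boundary term vanishes in the limit: `pT u M` is split at a fixed index `K`; the head is
killed by the weight, and the rest is at most a tail of `∑ cw m k ‖u k‖²` by Cauchy–Schwarz and
`sum_inv_cw`. -/
lemma boundary_tendsto (m : ℕ) (u : ℕ → ℂ) (hu : Summable fun k => cw m k * ‖u k‖ ^ 2) :
    Filter.Tendsto (fun M => (m + 1) * cw (m + 1) M * ‖pT u M‖ ^ 2) Filter.atTop (nhds 0) := by
  rw [Metric.tendsto_atTop]
  intro ε hε
  obtain ⟨K, hK⟩ : ∃ K, ∑' k, cw m (k + K) * ‖u (k + K)‖ ^ 2 < ε / 4 :=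
    ((tendsto_sum_nat_add fun k => cw m k * ‖u k‖ ^ 2).eventually_lt_const
      (by positivity)).exists
  have hcw : Filter.Tendsto (fun M => (m + 1) * cw (m + 1) M * (2 * ‖∑ k ∈ Finset.range K, u k‖ ^ 2))
      Filter.atTop (nhds 0) := by
    simpa using ((cw_tendsto m).const_mul ((m:ℝ) + 1)).mul_const (2 * ‖∑ k ∈ Finset.range K, u k‖ ^ 2)
  obtain ⟨M₀, hM₀⟩ := Filter.eventually_atTop.1 (hcw.eventually_lt_const (half_pos hε))
  refine ⟨max M₀ K, fun M hM => ?_⟩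
  have hMK : K ≤ M + 1 := by omega
  have hc := cw_pos (m + 1) M
  rw [dist_zero_right, Real.norm_of_nonneg (by positivity)]
  have hsplit : pT u M = ∑ k ∈ Finset.range K, u k + ∑ k ∈ Finset.Ico K (M + 1), u k :=
    (Finset.sum_range_add_sum_Ico _ hMK).symm
  have hCS : ‖∑ k ∈ Finset.Ico K (M + 1), u k‖ ^ 2
      ≤ (∑ k ∈ Finset.Ico K (M + 1), cw m k * ‖u k‖ ^ 2) * ((m + 1) * cw (m + 1) M)⁻¹ := by
    have h1 : ‖∑ k ∈ Finset.Ico K (M + 1), u k‖ ^ 2 ≤ (∑ k ∈ Finset.Ico K (M + 1), ‖u k‖) ^ 2 := by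
      gcongr; exact norm_sum_le _ _
    refine h1.trans ((Finset.sum_sq_le_sum_mul_sum_of_sq_le_mul (Finset.Ico K (M + 1))
      (f := fun k => cw m k * ‖u k‖ ^ 2) (g := fun k => (cw m k)⁻¹) ?_ ?_ ?_).trans ?_)
    · intro k _; have := cw_pos m k; positivity
    · intro k _; have := cw_pos m k; positivity
    · intro k _; have := cw_pos m k; exact le_of_eq (by field_simp)
    · rw [← sum_inv_cw]
      refine mul_le_mul_of_nonneg_left ?_ (Finset.sum_nonneg fun k _ => ?_)
      · refine Finset.sum_le_sum_of_subset_of_nonneg (fun k hk => ?_) fun k _ _ => ?_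
        · simp at hk ⊢; omega
        · have := cw_pos m k; positivity
      · have := cw_pos m k; positivity
  have htail : ∑ k ∈ Finset.Ico K (M + 1), cw m k * ‖u k‖ ^ 2 < ε / 4 := by
    refine lt_of_le_of_lt ?_ hK
    rw [Finset.sum_Ico_eq_sum_range]
    simp_rw [add_comm K]
    refine Summable.sum_le_tsum _ (fun k _ => ?_) ?_
    · have := cw_pos m (k + K); positivity
    · exact (summable_nat_add_iff K).2 hu
  have h2 : ‖pT u M‖ ^ 2 ≤ 2 * ‖∑ k ∈ Finset.range K, u k‖ ^ 2
      + 2 * ‖∑ k ∈ Finset.Ico K (M + 1), u k‖ ^ 2 := by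
    rw [hsplit]
    have := norm_add_le (∑ k ∈ Finset.range K, u k) (∑ k ∈ Finset.Ico K (M + 1), u k)
    have h3 := pow_le_pow_left₀ (norm_nonneg _) this 2
    nlinarith [sq_nonneg (‖∑ k ∈ Finset.range K, u k‖ - ‖∑ k ∈ Finset.Ico K (M + 1), u k‖)]
  have h4 := hM₀ M (le_trans (le_max_left _ _) hM)
  set A := ‖∑ k ∈ Finset.range K, u k‖ ^ 2
  set B := ‖∑ k ∈ Finset.Ico K (M + 1), u k‖ ^ 2
  set C := ((m:ℝ) + 1) * cw (m + 1) M with hC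
  have hCpos : 0 < C := by positivity
  have h5 : C * B ≤ ∑ k ∈ Finset.Ico K (M + 1), cw m k * ‖u k‖ ^ 2 := by
    have := mul_le_mul_of_nonneg_left hCS hCpos.le
    rwa [mul_comm C (_ * _), inv_mul_cancel_right₀ hCpos.ne'] at this
  have h6 : C * ‖pT u M‖ ^ 2 ≤ C * (2 * A + 2 * B) := mul_le_mul_of_nonneg_left h2 hCpos.le
  linarith

lemma hasSum_pF (m : ℕ) (u : ℕ → ℂ) (hu : Summable fun k => cw m k * ‖u k‖ ^ 2) :
    HasSum (fun N => cw (m + 2) N * ‖pF (m + 1) u N‖ ^ 2) (∑' k, cw m k * ‖u k‖ ^ 2) := by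
  rw [hasSum_iff_tendsto_nat_of_nonneg]
  · have h1 := (Filter.tendsto_add_atTop_iff_nat 1).2 hu.hasSum.tendsto_sum_nat
    have := h1.sub (boundary_tendsto m u hu)
    rw [sub_zero] at this
    refine this.congr fun M => ?_
    rw [← partial_identity]; ring
  · intro N; have := cw_pos (m + 2) N; positivity

/-- Finiteness on the `pF` side forces finiteness on the `u` side after adding a multiple of the
sequence `(cw m k)⁻¹`, which spans the kernel of `pF (m + 1)`. The multiple is chosen so that
`cw (m + 1) N * pT u N` tends to `0`. -/
lemma exists_shift (m : ℕ) (u : ℕ → ℂ)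
    (hF : Summable fun N => cw (m + 2) N * ‖pF (m + 1) u N‖ ^ 2) :
    ∃ β : ℂ, Summable fun k => cw m k * ‖u k + β * ((cw m k)⁻¹ : ℝ)‖ ^ 2 := by
  set x : ℕ → ℝ := fun N => cw (m + 2) N * ‖pF (m + 1) u N‖ ^ 2 with hx
  have hx0 : ∀ N, 0 ≤ x N := fun N => by have := cw_pos (m + 2) N; positivity
  set R : ℕ → ℂ := fun N => (cw (m + 1) N : ℂ) * pT u N with hR
  have hRd : ∀ N, R (N + 1) - R N = (cw (m + 2) N : ℂ) * pF (m + 1) u N := by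
    intro N
    simp only [hR, pF]
    rw [← cw_succ_left (m + 1) N, ← cw_succ_right (m + 1) N, pT_succ]
    push_cast; ring
  have hsum : Summable fun N => R (N + 1) - R N := by
    refine Summable.of_norm (Summable.of_nonneg_of_le (fun _ => norm_nonneg _) (fun N => ?_)
      ((hF.add (summable_cw m)).div_const 2))
    have hc := cw_pos (m + 2) N
    rw [hRd, norm_mul, Complex.norm_real, Real.norm_of_nonneg hc.le]
    nlinarith [sq_nonneg (‖pF (m + 1) u N‖ - 1)]
  -- `L` is the limit of `R`; the shift below replaces `R` by `R - L`.
  set L : ℂ := R 0 + ∑' N, (R (N + 1) - R N) with hL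
  have hRL : ∀ M, R M - L = - ∑' N, (R (N + M + 1) - R (N + M)) := by
    intro M
    have := hsum.sum_add_tsum_nat_add M
    rw [Finset.sum_range_sub] at this
    rw [hL, ← this]; ring
  have tail_cw : ∀ M, Summable fun N => cw (m + 2) (N + M) := fun M => (summable_nat_add_iff M).2 (summable_cw m)
  have tail_x : ∀ M, Summable fun N => x (N + M) := fun M => (summable_nat_add_iff M).2 hF
  have tail_val : ∀ M, ∑' N, cw (m + 2) (N + M) = cw (m + 1) M / (m + 1) := by
    intro M
    refine (tail_cw M).hasSum.unique ?_ |>.trans rfl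
    rw [hasSum_iff_tendsto_nat_of_nonneg (fun N => (cw_pos _ _).le)]
    have h := (((Filter.tendsto_add_atTop_iff_nat M).2 (cw_tendsto m)).const_sub (cw (m+1) M)).div_const ((m:ℝ) + 1)
    rw [sub_zero] at h
    refine h.congr fun K => ?_
    rw [div_eq_iff (by positivity), Finset.sum_mul]
    have := Finset.sum_range_sub' (fun N => cw (m + 1) (N + M)) K
    simp only [zero_add] at this
    rw [← this]
    refine Finset.sum_congr rfl fun N _ => ?_
    rw [show N + 1 + M = N + M + 1 by ring, cw_diff]; push_cast; ring
  have tail_bound : ∀ M, ‖R M - L‖ ^ 2 ≤ (∑' N, x N) * (cw (m + 1) M / (m + 1)) := by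
    intro M
    have hs : Summable fun N => ‖R (N + M + 1) - R (N + M)‖ :=
      (summable_nat_add_iff (f := fun N => ‖R (N + 1) - R N‖) M).2 hsum.norm
    have h1 : ‖R M - L‖ ≤ ∑' N, ‖R (N + M + 1) - R (N + M)‖ := by
      rw [hRL, norm_neg]; exact norm_tsum_le_tsum_norm hs
    refine (pow_le_pow_left₀ (norm_nonneg _) h1 2).trans ?_
    refine le_of_tendsto ((hs.hasSum.tendsto_sum_nat).pow 2) (Filter.Eventually.of_forall fun K => ?_)
    refine (Finset.sum_sq_le_sum_mul_sum_of_sq_le_mul (Finset.range K)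
      (f := fun N => x (N + M)) (g := fun N => cw (m + 2) (N + M)) (fun N _ => hx0 _)
      (fun N _ => (cw_pos _ _).le) ?_).trans ?_
    · intro N _
      rw [hRd, norm_mul, Complex.norm_real, Real.norm_of_nonneg (cw_pos _ _).le, hx]
      exact le_of_eq (by ring)
    · refine mul_le_mul ?_ ?_ (Finset.sum_nonneg fun _ _ => (cw_pos _ _).le) (tsum_nonneg hx0)
      · refine ((tail_x M).sum_le_tsum _ fun _ _ => hx0 _).trans ?_
        rw [← hF.sum_add_tsum_nat_add M]
        exact le_add_of_nonneg_left (Finset.sum_nonneg fun _ _ => hx0 _)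
      · rw [← tail_val]
        exact (tail_cw M).sum_le_tsum _ fun _ _ => (cw_pos _ _).le
  refine ⟨-(m + 1) * L, ?_⟩
  set u' : ℕ → ℂ := fun k => u k + (-(m + 1) * L) * ((cw m k)⁻¹ : ℝ) with hu'
  have hT : ∀ N, pT u' N = pT u N - L * ((cw (m + 1) N)⁻¹ : ℝ) := by
    intro N
    simp only [pT, hu']
    rw [Finset.sum_add_distrib, ← Finset.mul_sum, ← Complex.ofReal_sum, sum_inv_cw]
    have h : ((m:ℂ) + 1) ≠ 0 := by exact_mod_cast m.succ_ne_zero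
    push_cast
    rw [mul_inv]
    field_simp
    ring
  have hF' : ∀ N, pF (m + 1) u' N = pF (m + 1) u N := by
    intro N
    simp only [pF]
    rw [hT]
    simp only [hu']
    have h1 := cw_succ_right m N
    have h2 := cw_pos (m + 1) N
    have h3 : ((cw (m + 1) N : ℝ) : ℂ) ≠ 0 := by exact_mod_cast h2.ne'
    have h4 : (N:ℂ) + 1 ≠ 0 := by exact_mod_cast N.succ_ne_zero
    rw [← h1]
    push_cast
    field_simp
    ring
  refine summable_of_sum_range_le (c := (∑' N, x N) + ∑' N, x N) (fun k => ?_) fun K => ?_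
  · have := cw_pos m k; positivity
  cases K with
  | zero => simpa using tsum_nonneg hx0
  | succ M =>
    rw [← partial_identity m u' M]
    have hc := cw_pos (m + 1) M
    refine add_le_add ?_ ?_
    · simp_rw [hF']
      exact hF.sum_le_tsum _ fun _ _ => hx0 _
    · have h1 : ‖pT u' M‖ ^ 2 = ‖R M - L‖ ^ 2 / cw (m + 1) M ^ 2 := by
        have : pT u' M = (R M - L) / (cw (m + 1) M : ℂ) := by
          have h : (cw (m + 1) M : ℂ) ≠ 0 := by exact_mod_cast hc.ne'
          rw [hT, hR]; push_cast; field_simp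
        rw [this, norm_div, div_pow, Complex.norm_real, Real.norm_of_nonneg hc.le]
      rw [h1]
      have h2 := tail_bound M
      have h3 : ((m:ℝ) + 1) * cw (m + 1) M * (‖R M - L‖ ^ 2 / cw (m + 1) M ^ 2)
          = ‖R M - L‖ ^ 2 * ((m + 1) / cw (m + 1) M) := by field_simp
      rw [h3]
      calc _ ≤ (∑' N, x N) * (cw (m + 1) M / (m + 1)) * ((m + 1) / cw (m + 1) M) := by gcongr
        _ = _ := by field_simp

/-! ### Parseval on circles and on the disc -/

lemma summable_norm_sq {c : ℕ → ℂ} (hc : Summable fun k => ‖c k‖) :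
    Summable fun k => ‖c k‖ ^ 2 := by
  have := (hc.mul_of_nonneg hc (fun _ => norm_nonneg _) (fun _ => norm_nonneg _)).comp_injective
    (i := fun k : ℕ => (k, k)) (fun a b h => by simpa using h)
  refine this.congr fun k => ?_
  simp [sq]

/-- Parseval for absolutely convergent power series on the unit circle, as the limit of the
identity for polynomials. -/
lemma parseval_seq (c : ℕ → ℂ) (hc : Summable fun k => ‖c k‖) :
    ∫ θ in (0:ℝ)..2 * Real.pi, ‖∑' k, c k * circleMap 0 1 θ ^ k‖ ^ 2
      = 2 * Real.pi * ∑' k, ‖c k‖ ^ 2 := by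
  have hc2 : Summable fun k => ‖c k‖ ^ 2 :=
    summable_norm_sq hc
  have hn : ∀ θ k, ‖c k * circleMap 0 1 θ ^ k‖ = ‖c k‖ := by
    intro θ k; simp [norm_pow]
  have key : ∀ K : ℕ, ∫ θ in (0:ℝ)..2 * Real.pi, ‖∑ k ∈ Finset.range K, c k * circleMap 0 1 θ ^ k‖ ^ 2
      = 2 * Real.pi * ∑ k ∈ Finset.range K, ‖c k‖ ^ 2 := by
    intro K
    let p : Polynomial ℂ := ∑ k ∈ Finset.range K, Polynomial.monomial k (c k)
    have hp := p.sum_sq_norm_coeff_eq_circleAverage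
    have hcoef : ∀ i, p.coeff i = if i < K then c i else 0 := by
      intro i
      simp [p, Polynomial.finsetSum_coeff, Polynomial.coeff_monomial]
    have h1 : ∑ i ∈ p.support, ‖p.coeff i‖ ^ 2 = ∑ k ∈ Finset.range K, ‖c k‖ ^ 2 := by
      rw [Finset.sum_subset (s₂ := Finset.range K)]
      · exact Finset.sum_congr rfl fun i hi => by simp [hcoef, Finset.mem_range.1 hi]
      · intro i hi
        by_contra h
        simp [hcoef] at hi h
        omega
      · intro i _ hi
        simp at hi
        simp [hi]
    have h2 : ∀ z, p.eval z = ∑ k ∈ Finset.range K, c k * z ^ k := by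
      intro z; simp [p, Polynomial.eval_finsetSum]
    rw [h1, Real.circleAverage_def] at hp
    simp only [h2, smul_eq_mul] at hp
    rw [hp]
    field_simp
  have lim1 : Filter.Tendsto (fun K : ℕ => 2 * Real.pi * ∑ k ∈ Finset.range K, ‖c k‖ ^ 2) Filter.atTop
      (nhds (2 * Real.pi * ∑' k, ‖c k‖ ^ 2)) :=
    hc2.hasSum.tendsto_sum_nat.const_mul _
  refine tendsto_nhds_unique ?_ lim1
  simp_rw [← key]
  refine intervalIntegral.tendsto_integral_filter_of_dominated_convergence
    (fun _ => (∑' k, ‖c k‖) ^ 2) ?_ ?_ ?_ ?_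
  · refine Filter.Eventually.of_forall fun K => Continuous.aestronglyMeasurable ?_
    fun_prop
  · refine Filter.Eventually.of_forall fun K => Filter.Eventually.of_forall fun θ _ => ?_
    rw [Real.norm_of_nonneg (by positivity)]
    gcongr
    refine (norm_sum_le _ _).trans ?_
    simp_rw [hn]
    exact hc.sum_le_tsum _ (fun _ _ => norm_nonneg _)
  · exact intervalIntegrable_const
  · refine Filter.Eventually.of_forall fun θ _ => ?_
    have : Summable fun k => c k * circleMap 0 1 θ ^ k := by
      refine Summable.of_norm ?_
      simpa only [hn] using hc
    exact (this.hasSum.tendsto_sum_nat.norm).pow 2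

lemma hasSum_coeff {F : ℂ → ℂ} (hF : DifferentiableOn ℂ F (ball (0:ℂ) 1)) {z : ℂ}
    (hz : z ∈ ball (0:ℂ) 1) : HasSum (fun k => coeff F k * z ^ k) (F z) := by
  have := Complex.hasSum_taylorSeries_on_ball hF hz
  convert! this using 2 with k
  simp [coeff]; ring

lemma summable_coeff {F : ℂ → ℂ} (hF : DifferentiableOn ℂ F (ball (0:ℂ) 1)) {r : ℝ}
    (h0 : 0 ≤ r) (h1 : r < 1) : Summable fun k => ‖coeff F k * (r:ℂ) ^ k‖ :=
  (hasSum_coeff hF (z := (r:ℂ)) (by simpa [abs_of_nonneg h0] using h1)).summable.norm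

lemma parseval_circle {F : ℂ → ℂ} (hF : DifferentiableOn ℂ F (ball (0:ℂ) 1)) {r : ℝ}
    (h0 : 0 ≤ r) (h1 : r < 1) :
    ∫⁻ θ in Set.Ioo (-Real.pi) Real.pi, (‖F (r * (Real.cos θ + Real.sin θ * I))‖₊ : ℝ≥0∞) ^ 2
      = ENNReal.ofReal (2 * Real.pi) *
        ∑' k, (‖coeff F k‖₊ : ℝ≥0∞) ^ 2 * ENNReal.ofReal (r ^ (2 * k)) := by
  set c : ℕ → ℂ := fun k => coeff F k * (r:ℂ) ^ k with hcdef
  have hc : Summable fun k => ‖c k‖ := summable_coeff hF h0 h1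
  have hc2 : Summable fun k => ‖c k‖ ^ 2 :=
    summable_norm_sq hc
  have hcirc : ∀ θ : ℝ, (r * (Real.cos θ + Real.sin θ * I) : ℂ) = r * circleMap 0 1 θ := by
    intro θ
    simp [circleMap, Complex.exp_mul_I]
  have hball : ∀ θ : ℝ, (r * circleMap 0 1 θ : ℂ) ∈ ball (0:ℂ) 1 := by
    intro θ; simpa [abs_of_nonneg h0] using h1
  have hFc : ∀ θ : ℝ, F (r * circleMap 0 1 θ) = ∑' k, c k * circleMap 0 1 θ ^ k := by
    intro θ
    rw [← (hasSum_coeff hF (hball θ)).tsum_eq]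
    congr 1; ext k; simp only [hcdef, mul_pow]; ring
  have hcont : Continuous fun θ : ℝ => ‖F (r * circleMap 0 1 θ)‖ ^ 2 := by
    refine (Continuous.norm ?_).pow 2
    exact hF.continuousOn.comp_continuous (by fun_prop) hball
  have e1 : ∫⁻ θ in Set.Ioo (-Real.pi) Real.pi, (‖F (r * (Real.cos θ + Real.sin θ * I))‖₊ : ℝ≥0∞) ^ 2
      = ENNReal.ofReal (∫ θ in Set.Ioo (-Real.pi) Real.pi, ‖F (r * circleMap 0 1 θ)‖ ^ 2) := by
    rw [ofReal_integral_eq_lintegral_ofReal]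
    · refine lintegral_congr fun θ => ?_
      rw [hcirc, ENNReal.ofReal_pow (norm_nonneg _), ofReal_norm]; rfl
    · exact (hcont.integrableOn_Icc (a := -Real.pi) (b := Real.pi)).mono_set Set.Ioo_subset_Icc_self
    · exact Filter.Eventually.of_forall fun _ => by positivity
  have hper : Function.Periodic (fun θ : ℝ => ‖F (r * circleMap 0 1 θ)‖ ^ 2) (2 * Real.pi) := by
    intro θ
    simp only [periodic_circleMap 0 1 θ]
  have e2 : ∫ θ in Set.Ioo (-Real.pi) Real.pi, ‖F (r * circleMap 0 1 θ)‖ ^ 2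
      = 2 * Real.pi * ∑' k, ‖c k‖ ^ 2 := by
    rw [← parseval_seq c hc, ← integral_Ioc_eq_integral_Ioo,
      ← intervalIntegral.integral_of_le (by linarith [Real.pi_pos])]
    have := hper.intervalIntegral_add_eq (-Real.pi) 0
    simp only [zero_add] at this
    rw [show -Real.pi + 2 * Real.pi = Real.pi by ring] at this
    rw [this]
    simp_rw [hFc]
  rw [e1, e2, ENNReal.ofReal_mul (by positivity), ENNReal.ofReal_tsum_of_nonneg (fun _ => by positivity) hc2]
  congr 1
  refine tsum_congr fun k => ?_
  rw [hcdef]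
  simp only [norm_mul, norm_pow, mul_pow]
  rw [ENNReal.ofReal_mul (by positivity), ENNReal.ofReal_pow (norm_nonneg _), ofReal_norm]
  congr 2
  simp [abs_of_nonneg h0]; ring

/-- A beta integral in the variable `r²`, by induction on `n` from
`(1 - r²)ⁿ⁺¹ = (1 - r²)ⁿ - r² (1 - r²)ⁿ`. -/
lemma radial_integral (n N : ℕ) :
    ∫ r in (0:ℝ)..1, 2 * r ^ (2 * N + 1) * (1 - r ^ 2) ^ n
      = (N.factorial * n.factorial : ℝ) / (N + n + 1).factorial := by
  induction n generalizing N with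
  | zero =>
    have h : (2 * (N:ℝ) + 1 + 1) ≠ 0 := by positivity
    have h' : ((N:ℝ) + 1) ≠ 0 := by positivity
    have := N.factorial_pos
    simp [Nat.factorial_succ]
    field_simp
    ring
  | succ n ih =>
    have : ∀ r : ℝ, 2 * r ^ (2 * N + 1) * (1 - r ^ 2) ^ (n + 1)
        = 2 * r ^ (2 * N + 1) * (1 - r ^ 2) ^ n - 2 * r ^ (2 * (N + 1) + 1) * (1 - r ^ 2) ^ n := by
      intro r; ring
    simp_rw [this]
    rw [intervalIntegral.integral_sub (Continuous.intervalIntegrable (by fun_prop) _ _)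
      (Continuous.intervalIntegrable (by fun_prop) _ _), ih, ih]
    have e : N + 1 + n + 1 = N + n + 1 + 1 := by ring
    have e' : N + (n + 1) + 1 = N + n + 1 + 1 := by ring
    rw [e, e', Nat.factorial_succ (N + n + 1), Nat.factorial_succ N, Nat.factorial_succ n]
    have := (N + n + 1).factorial_pos
    push_cast
    field_simp
    ring

lemma radial_lintegral (n N : ℕ) :
    ∫⁻ r in Set.Ioo (0:ℝ) 1, ENNReal.ofReal (2 * r ^ (2 * N + 1) * (1 - r ^ 2) ^ n)
      = ENNReal.ofReal ((N.factorial * n.factorial : ℝ) / (N + n + 1).factorial) := by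
  rw [← radial_integral, intervalIntegral.integral_of_le zero_le_one, integral_Ioc_eq_integral_Ioo,
    ofReal_integral_eq_lintegral_ofReal]
  · exact (Continuous.integrableOn_Icc (by fun_prop)).mono_set Set.Ioo_subset_Icc_self
  · refine (ae_restrict_iff' measurableSet_Ioo).2 (Filter.Eventually.of_forall fun r hr => ?_)
    have : 0 ≤ 1 - r ^ 2 := by nlinarith [hr.1, hr.2]
    have := hr.1
    simp only [Pi.zero_apply]
    positivity

/-- The weighted Bergman norm in terms of Taylor coefficients, valid also when both sides are
infinite. -/
lemma area_parseval {F : ℂ → ℂ} (hF : DifferentiableOn ℂ F (ball (0:ℂ) 1)) (n : ℕ) :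
    ∫⁻ z in ball (0:ℂ) 1, (‖F z‖₊ : ℝ≥0∞) ^ 2 * ENNReal.ofReal ((1 - ‖z‖ ^ 2) ^ n) ∂nA
      = ∑' N, (‖coeff F N‖₊ : ℝ≥0∞) ^ 2 *
        ENNReal.ofReal ((N.factorial * n.factorial : ℝ) / (N + n + 1).factorial) := by
  have hpi := Real.pi_pos
  set G : ℂ → ℝ≥0∞ := (ball (0:ℂ) 1).indicator
    (fun z => (‖F z‖₊ : ℝ≥0∞) ^ 2 * ENNReal.ofReal ((1 - ‖z‖ ^ 2) ^ n)) with hG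
  have hGm : Measurable G := by
    have h1 : Measurable ((ball (0:ℂ) 1).indicator F) := by
      classical
      rw [← Set.piecewise_eq_indicator]
      exact hF.continuousOn.measurable_piecewise continuousOn_const measurableSet_ball
    have h2 : G = fun z => (‖(ball (0:ℂ) 1).indicator F z‖₊ : ℝ≥0∞) ^ 2 *
        ENNReal.ofReal ((1 - ‖z‖ ^ 2) ^ n) := by
      ext z
      by_cases hz : z ∈ ball (0:ℂ) 1
      · simp only [hG, Set.indicator_of_mem hz]
      · simp only [hG, Set.indicator_of_notMem hz]; simp
    rw [h2]
    fun_prop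
  have e1 : ∫⁻ z in ball (0:ℂ) 1, (‖F z‖₊ : ℝ≥0∞) ^ 2 * ENNReal.ofReal ((1 - ‖z‖ ^ 2) ^ n) ∂nA
      = (ENNReal.ofReal Real.pi)⁻¹ * ∫⁻ z, G z := by
    rw [nA, Measure.restrict_smul, lintegral_smul_measure, smul_eq_mul,
      lintegral_indicator measurableSet_ball]
  rw [e1, ← Complex.lintegral_comp_polarCoord_symm]
  have e2 : ∫⁻ p in polarCoord.target, ENNReal.ofReal p.1 • G (Complex.polarCoord.symm p)
      = ∫⁻ r in Set.Ioi (0:ℝ), ∫⁻ θ in Set.Ioo (-Real.pi) Real.pi,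
        ENNReal.ofReal r * G (r * (Real.cos θ + Real.sin θ * I)) := by
    rw [polarCoord_target, Measure.volume_eq_prod, ← Measure.prod_restrict, lintegral_prod]
    · simp
    · simp only [Complex.polarCoord_symm_apply, smul_eq_mul]
      refine Measurable.aemeasurable ?_
      refine Measurable.mul (by fun_prop) (hGm.comp (by fun_prop))
  have e3 : ∀ r ∈ Set.Ioi (0:ℝ), ∫⁻ θ in Set.Ioo (-Real.pi) Real.pi,
        ENNReal.ofReal r * G (r * (Real.cos θ + Real.sin θ * I))
      = (Set.Ioo (0:ℝ) 1).indicator (fun r => ENNReal.ofReal Real.pi *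
        ∑' k, (‖coeff F k‖₊ : ℝ≥0∞) ^ 2 *
          ENNReal.ofReal (2 * r ^ (2 * k + 1) * (1 - r ^ 2) ^ n)) r := by
    intro r hr
    have hr0 : (0:ℝ) < r := hr
    have hnorm : ∀ θ : ℝ, ‖(r * (Real.cos θ + Real.sin θ * I) : ℂ)‖ = r := by
      intro θ
      rw [norm_mul, Complex.ofReal_cos, Complex.ofReal_sin, ← Complex.exp_mul_I,
        Complex.norm_exp_ofReal_mul_I, mul_one, Complex.norm_real, Real.norm_of_nonneg hr0.le]
    by_cases h1 : r < 1
    · rw [Set.indicator_of_mem (show r ∈ Set.Ioo (0:ℝ) 1 from ⟨hr0, h1⟩)]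
      have hpos : 0 ≤ 1 - r ^ 2 := by nlinarith
      have : ∀ θ : ℝ, ENNReal.ofReal r * G (r * (Real.cos θ + Real.sin θ * I))
          = ENNReal.ofReal (r * (1 - r ^ 2) ^ n) *
            (‖F (r * (Real.cos θ + Real.sin θ * I))‖₊ : ℝ≥0∞) ^ 2 := by
        intro θ
        rw [hG, Set.indicator_of_mem (by rw [mem_ball_zero_iff, hnorm]; exact h1), hnorm,
          ENNReal.ofReal_mul hr0.le]
        ring
      simp_rw [this]
      rw [lintegral_const_mul' _ _ ENNReal.ofReal_ne_top, parseval_circle hF hr0.le h1,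
        ← mul_assoc, ← ENNReal.ofReal_mul (by positivity), ← ENNReal.tsum_mul_left, ← ENNReal.tsum_mul_left]
      refine tsum_congr fun k => ?_
      rw [mul_left_comm, ← ENNReal.ofReal_mul (by positivity), mul_left_comm (ENNReal.ofReal Real.pi),
        ← ENNReal.ofReal_mul (by positivity)]
      congr 2
      ring
    · rw [Set.indicator_of_notMem (fun h => h1 h.2)]
      have : ∀ θ : ℝ, ENNReal.ofReal r * G (r * (Real.cos θ + Real.sin θ * I)) = 0 := by
        intro θ
        rw [hG, Set.indicator_of_notMem (by rw [mem_ball_zero_iff, hnorm]; exact h1), mul_zero]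
      simp_rw [this]
      simp
  rw [e2, setLIntegral_congr_fun measurableSet_Ioi e3, lintegral_indicator measurableSet_Ioo,
    Measure.restrict_restrict measurableSet_Ioo,
    Set.inter_eq_left.2 (Set.Ioo_subset_Ioi_self : Set.Ioo (0:ℝ) 1 ⊆ Set.Ioi 0),
    lintegral_const_mul' _ _ ENNReal.ofReal_ne_top, ← mul_assoc,
    ENNReal.inv_mul_cancel (by simpa using hpi) ENNReal.ofReal_ne_top, one_mul, lintegral_tsum]
  · refine tsum_congr fun N => ?_
    rw [lintegral_const_mul' _ _ (by finiteness), radial_lintegral]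
  · intro k
    fun_prop

/-! ### Taylor coefficients of derivatives and products -/

lemma mem_ball_nhds {z : ℂ} (hz : z ∈ ball (0:ℂ) 1) : ball (0:ℂ) 1 ∈ nhds z :=
  isOpen_ball.mem_nhds hz

lemma sub_ne {lam : ℂ} (hlam : lam ∈ sphere (0:ℂ) 1) {z : ℂ} (hz : z ∈ ball (0:ℂ) 1) :
    z - lam ≠ 0 := by
  intro h
  rw [sub_eq_zero.1 h, mem_ball_zero_iff] at hz
  rw [mem_sphere_zero_iff_norm] at hlam
  linarith

lemma contDiffAt_origin {g : ℂ → ℂ} (hg : DifferentiableOn ℂ g (ball (0:ℂ) 1)) (k : ℕ) :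
    ContDiffAt ℂ k g 0 :=
  (hg.analyticAt (mem_ball_nhds (by simp))).contDiffAt

lemma differentiableOn_iteratedDeriv {f : ℂ → ℂ} (hf : DifferentiableOn ℂ f (ball (0:ℂ) 1))
    (n : ℕ) : DifferentiableOn ℂ (iteratedDeriv n f) (ball (0:ℂ) 1) := by
  induction n with
  | zero => simpa using hf
  | succ n ih => rw [iteratedDeriv_succ]; exact ih.deriv isOpen_ball

lemma coeff_congr {f g : ℂ → ℂ} (h : ∀ z ∈ ball (0:ℂ) 1, f z = g z) (k : ℕ) :
    coeff f k = coeff g k := by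
  unfold coeff
  rw [Filter.EventuallyEq.iteratedDeriv_eq k
    (Filter.eventually_of_mem (mem_ball_nhds (by simp)) h)]

lemma coeff_iteratedDeriv (n : ℕ) (f : ℂ → ℂ) (k : ℕ) :
    coeff (iteratedDeriv n f) k = coeff f (k + n) * ((cw n k)⁻¹ : ℝ) := by
  have h1 : (k.factorial : ℂ) ≠ 0 := by exact_mod_cast k.factorial_ne_zero
  have h2 : ((k + n).factorial : ℂ) ≠ 0 := by exact_mod_cast (k + n).factorial_ne_zero
  simp only [coeff, iteratedDeriv_eq_iterate, ← Function.iterate_add_apply, cw]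
  push_cast
  field_simp

lemma coeff_add {f g : ℂ → ℂ} (hf : DifferentiableOn ℂ f (ball (0:ℂ) 1))
    (hg : DifferentiableOn ℂ g (ball (0:ℂ) 1)) (k : ℕ) :
    coeff (fun z => f z + g z) k = coeff f k + coeff g k := by
  unfold coeff
  rw [iteratedDeriv_fun_add (contDiffAt_origin hf k) (contDiffAt_origin hg k), add_div]

lemma coeff_const_mul {f : ℂ → ℂ} (c : ℂ) (k : ℕ) :
    coeff (fun z => c * f z) k = c * coeff f k := by
  unfold coeff
  rw [iteratedDeriv_const_mul_field, mul_div_assoc]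

lemma coeff_const_succ (c : ℂ) (k : ℕ) : coeff (fun _ => c) (k + 1) = 0 := by
  simp [coeff, iteratedDeriv_const]

lemma coeff_mul_zero (lam : ℂ) (g : ℂ → ℂ) :
    coeff (fun z => (z - lam) * g z) 0 = - lam * coeff g 0 := by
  simp [coeff]

lemma coeff_mul_succ (lam : ℂ) {g : ℂ → ℂ} (hg : DifferentiableOn ℂ g (ball (0:ℂ) 1)) (k : ℕ) :
    coeff (fun z => (z - lam) * g z) (k + 1) = coeff g k - lam * coeff g (k + 1) := by
  unfold coeff
  have h1 : ((k:ℂ) + 1) ≠ 0 := by exact_mod_cast k.succ_ne_zero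
  have h2 : (k.factorial : ℂ) ≠ 0 := by exact_mod_cast k.factorial_ne_zero
  have h3 : ∀ i, iteratedDeriv (i + 1 + 1) (fun z : ℂ => z - lam) 0 = 0 := by
    intro i
    rw [iteratedDeriv_succ', iteratedDeriv_succ']
    simp
  rw [iteratedDeriv_fun_mul (by fun_prop) (contDiffAt_origin hg _), Finset.sum_range_succ',
    Finset.sum_range_succ', Finset.sum_eq_zero (fun i _ => by rw [h3]; simp)]
  simp [Nat.factorial_succ]
  field_simp
  ring

/-! ### Passing from functions to sequences -/

/-- The hypotheses say coefficientwise that `(z - 1) F` is the `(m + 1)`-st derivative of `(z - 1) b`,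
for the power series with coefficients `F` and `b`. They determine `F` recursively. -/
lemma eq_pF (m : ℕ) (b F : ℕ → ℂ) (h0 : - F 0 = (b m - b (m + 1)) * ((cw (m + 1) 0)⁻¹ : ℝ))
    (h : ∀ k, F k - F (k + 1) = (b (k + 1 + m) - b (k + 1 + m + 1)) * ((cw (m + 1) (k + 1))⁻¹ : ℝ))
    (N : ℕ) : F N = pF (m + 1) (fun k => b (k + m) * ((cw m k)⁻¹ : ℝ)) N := by
  have hc : ∀ n k, (cw n k : ℂ) ≠ 0 := fun n k => by exact_mod_cast (cw_pos n k).ne'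
  induction N with
  | zero =>
    have e1 := cw_succ_left m 0
    have e2 := cw_succ_right m 0
    simp only [Nat.cast_zero, zero_add, one_mul] at e1 e2
    have hm : (m:ℂ) + 1 ≠ 0 := by exact_mod_cast m.succ_ne_zero
    have := hc (m + 1) 0
    rw [← neg_neg (F 0), h0]
    simp [pF, pT, ← e1, ← e2, add_comm 1 m]
    field_simp
    ring
  | succ N ih =>
    have e1 := cw_succ_left m (N + 1)
    have e2 := cw_succ_right m (N + 1)
    have hN : F (N + 1) = F N - (b (N + 1 + m) - b (N + 1 + m + 1)) * ((cw (m + 1) (N + 1))⁻¹ : ℝ) := by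
      rw [← h]; ring
    rw [hN, ih]
    simp only [pF, pT_succ, ← e1, ← e2]
    have := hc (m + 1) (N + 1)
    have e3 : (N:ℂ) + 1 + m + 1 ≠ 0 := by exact_mod_cast (N + 1 + m).succ_ne_zero
    have e4 : (N:ℂ) + 1 + 1 ≠ 0 := by exact_mod_cast (N + 1).succ_ne_zero
    rw [show N + 1 + 1 + m = N + 1 + m + 1 by ring]
    push_cast
    field_simp
    ring

/-- The `k`-th Taylor coefficient of `g⁽ᵐ⁾`, multiplied by `λ^(k+m+1)` so that the point `λ` of the
circle is moved to `1`. -/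
noncomputable def useq (lam : ℂ) (m : ℕ) (g : ℂ → ℂ) (k : ℕ) : ℂ :=
  lam ^ (k + m + 1) * coeff g (k + m) * ((cw m k)⁻¹ : ℝ)

lemma coeff_quot {lam : ℂ} (hlam : lam ∈ sphere (0:ℂ) 1) (m : ℕ) {f : ℂ → ℂ}
    (hf : DifferentiableOn ℂ f (ball (0:ℂ) 1)) {α : ℂ} {g : ℂ → ℂ}
    (hg : DifferentiableOn ℂ g (ball (0:ℂ) 1))
    (hfg : ∀ z ∈ ball (0:ℂ) 1, f z = α + (z - lam) * g z) (N : ℕ) :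
    lam ^ (N + m + 2) * coeff (fun z => iteratedDeriv (m + 1) f z / (z - lam)) N
      = pF (m + 1) (useq lam m g) N := by
  set F : ℂ → ℂ := fun z => iteratedDeriv (m + 1) f z / (z - lam) with hFdef
  have hF : DifferentiableOn ℂ F (ball (0:ℂ) 1) :=
    (differentiableOn_iteratedDeriv hf _).div (by fun_prop) fun z hz => sub_ne hlam hz
  have hFm : ∀ z ∈ ball (0:ℂ) 1, iteratedDeriv (m + 1) f z = (z - lam) * F z := by
    intro z hz
    rw [hFdef]; field_simp [sub_ne hlam hz]
  have ha : ∀ k, coeff f (k + 1) = coeff g k - lam * coeff g (k + 1) := by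
    intro k
    rw [coeff_congr hfg, coeff_add (f := fun _ => α) (g := fun z => (z - lam) * g z) (by fun_prop)
      (DifferentiableOn.mul (by fun_prop) hg),
      coeff_const_succ, coeff_mul_succ lam hg, zero_add]
  refine eq_pF m (fun k => lam ^ (k + 1) * coeff g k)
    (fun N => lam ^ (N + m + 2) * coeff F N) ?_ ?_ N
  · have h1 := coeff_iteratedDeriv (m + 1) f 0
    rw [coeff_congr hFm, coeff_mul_zero, zero_add, ha] at h1
    linear_combination lam ^ (m + 1) * h1
  · intro k
    have h1 := coeff_iteratedDeriv (m + 1) f (k + 1)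
    rw [coeff_congr hFm, coeff_mul_succ lam hF, ← add_assoc, ha] at h1
    linear_combination lam ^ (k + 1 + m + 1) * h1

lemma Dsig_eq {lam : ℂ} (hlam : lam ∈ sphere (0:ℂ) 1) (m : ℕ) (g : ℂ → ℂ) :
    Dsig m g = ENNReal.ofReal (1 / (m.factorial : ℝ)) *
      ∑' k, ENNReal.ofReal (cw m k * ‖useq lam m g k‖ ^ 2) := by
  have hl : ‖lam‖ = 1 := by simpa using hlam
  have hm : (0:ℝ) < m.factorial := by exact_mod_cast m.factorial_pos
  have hsplit : Dsig m g = ∑' k, ((k + m).choose m : ℝ≥0∞) * (‖coeff g (k + m)‖₊ : ℝ≥0∞) ^ 2 := by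
    have h := ENNReal.summable.sum_add_tsum_nat_add' (f := fun k : ℕ =>
      (k.choose m : ℝ≥0∞) * (‖coeff g k‖₊ : ℝ≥0∞) ^ 2) (k := m)
    rw [Dsig, ← h, Finset.sum_eq_zero, zero_add]
    intro k hk
    rw [Nat.choose_eq_zero_of_lt (Finset.mem_range.1 hk), Nat.cast_zero, zero_mul]
  rw [hsplit, ← ENNReal.tsum_mul_left]
  refine tsum_congr fun k => ?_
  have hc := cw_pos m k
  have hch : ((k + m).choose m : ℝ) = 1 / m.factorial * (cw m k)⁻¹ := by
    rw [Nat.cast_choose ℝ (Nat.le_add_left m k), Nat.add_sub_cancel, cw]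
    field_simp
  have hu : ‖useq lam m g k‖ = ‖coeff g (k + m)‖ * (cw m k)⁻¹ := by
    rw [useq, norm_mul, norm_mul, norm_pow, hl, one_pow, one_mul, Complex.norm_real,
      Real.norm_of_nonneg (by positivity)]
  rw [← ENNReal.ofReal_mul (by positivity), hu, ← ENNReal.ofReal_natCast, hch,
    ← enorm_eq_nnnorm, ← ofReal_norm, ← ENNReal.ofReal_pow (norm_nonneg _),
    ← ENNReal.ofReal_mul (by positivity)]
  congr 1
  field_simp

lemma Dloc_eq {lam : ℂ} (hlam : lam ∈ sphere (0:ℂ) 1) (m : ℕ) {f : ℂ → ℂ}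
    (hf : DifferentiableOn ℂ f (ball (0:ℂ) 1)) {α : ℂ} {g : ℂ → ℂ}
    (hg : DifferentiableOn ℂ g (ball (0:ℂ) 1))
    (hfg : ∀ z ∈ ball (0:ℂ) 1, f z = α + (z - lam) * g z) :
    Dloc lam (m + 1) f = ENNReal.ofReal (1 / (m.factorial : ℝ)) *
      ∑' N, ENNReal.ofReal (cw (m + 2) N * ‖pF (m + 1) (useq lam m g) N‖ ^ 2) := by
  have hl : ‖lam‖ = 1 := by simpa using hlam
  have hm : (0:ℝ) < m.factorial := by exact_mod_cast m.factorial_pos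
  have hm' : (0:ℝ) < (m + 1).factorial := by exact_mod_cast (m + 1).factorial_pos
  have hF : DifferentiableOn ℂ (fun z => iteratedDeriv (m + 1) f z / (z - lam)) (ball (0:ℂ) 1) :=
    (differentiableOn_iteratedDeriv hf _).div (by fun_prop) fun z hz => sub_ne hlam hz
  have e : ∫⁻ z in ball (0:ℂ) 1, (‖iteratedDeriv (m + 1) f z‖₊ : ℝ≥0∞) ^ 2 *
      ENNReal.ofReal (((1 - ‖z‖^2) / ‖z - lam‖^2) * (1 - ‖z‖^2)^(m + 1 - 1)) ∂nA
      = ∫⁻ z in ball (0:ℂ) 1, (‖iteratedDeriv (m + 1) f z / (z - lam)‖₊ : ℝ≥0∞) ^ 2 *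
        ENNReal.ofReal ((1 - ‖z‖ ^ 2) ^ (m + 1)) ∂nA := by
    refine setLIntegral_congr_fun measurableSet_ball fun z hz => ?_
    have hz' : 0 < ‖z - lam‖ := norm_pos_iff.2 (sub_ne hlam hz)
    simp only [← enorm_eq_nnnorm, ← ofReal_norm]
    rw [← ENNReal.ofReal_pow (norm_nonneg _), ← ENNReal.ofReal_pow (norm_nonneg _),
      ← ENNReal.ofReal_mul (by positivity), ← ENNReal.ofReal_mul (by positivity), norm_div,
      Nat.add_sub_cancel]
    congr 1
    field_simp
    ring
  rw [Dloc, e, area_parseval hF, ← ENNReal.tsum_mul_left, ← ENNReal.tsum_mul_left]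
  refine tsum_congr fun N => ?_
  have hN : (0:ℝ) < (N + (m + 1) + 1).factorial := by
    exact_mod_cast (N + (m + 1) + 1).factorial_pos
  rw [← coeff_quot hlam m hf hg hfg, norm_mul, norm_pow, hl, one_pow, one_mul,
    ← enorm_eq_nnnorm, ← ofReal_norm, ← ENNReal.ofReal_pow (norm_nonneg _),
    ← ENNReal.ofReal_mul (by positivity), ← ENNReal.ofReal_mul (by positivity),
    ← ENNReal.ofReal_mul (by positivity), Nat.add_sub_cancel, cw,
    show N + (m + 2) = N + (m + 1) + 1 by ring]
  congr 1
  field_simp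

/-- The coefficients of `1 / (z - λ)`, the function by which `g` changes with `α`. -/
lemma coeff_inv {lam : ℂ} (hlam : lam ∈ sphere (0:ℂ) 1) (k : ℕ) :
    lam ^ (k + 1) * coeff (fun z => (z - lam)⁻¹) k = -1 := by
  have hd : DifferentiableOn ℂ (fun z => (z - lam)⁻¹) (ball (0:ℂ) 1) :=
    DifferentiableOn.inv (by fun_prop) fun z hz => sub_ne hlam hz
  have h1 : ∀ z ∈ ball (0:ℂ) 1, (1:ℂ) = (z - lam) * (z - lam)⁻¹ :=
    fun z hz => (mul_inv_cancel₀ (sub_ne hlam hz)).symm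
  induction k with
  | zero =>
    have := coeff_congr h1 0
    rw [coeff_mul_zero] at this
    simp [coeff] at this ⊢
    linear_combination -this
  | succ k ih =>
    have := coeff_congr h1 (k + 1)
    rw [coeff_mul_succ lam hd, coeff_const_succ] at this
    linear_combination ih + lam ^ (k + 1) * this

lemma ofReal_mul_tsum_lt_top {c : ℝ} (hc : 0 < c) {x : ℕ → ℝ} (hx : ∀ k, 0 ≤ x k) :
    ENNReal.ofReal c * ∑' k, ENNReal.ofReal (x k) < ⊤ ↔ Summable x := by
  constructor
  · intro h
    have h1 : ∑' k, ENNReal.ofReal (x k) ≠ ⊤ := by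
      intro h2
      rw [h2, ENNReal.mul_top (by simpa using hc)] at h
      exact lt_irrefl _ h
    exact (ENNReal.summable_toReal h1).congr fun k => (ENNReal.toReal_ofReal (hx k))
  · intro h
    rw [← ENNReal.ofReal_tsum_of_nonneg hx h]
    exact ENNReal.mul_lt_top ENNReal.ofReal_lt_top ENNReal.ofReal_lt_top

theorem stmt5 (lam : ℂ) (hlam : lam ∈ sphere (0:ℂ) 1) (n : ℕ) (hn : 1 ≤ n)
    (f : ℂ → ℂ) (hf : DifferentiableOn ℂ f (ball (0:ℂ) 1)) :
    (Dloc lam n f < ⊤ ↔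
      ∃ (α : ℂ) (g : ℂ → ℂ), DifferentiableOn ℂ g (ball (0:ℂ) 1) ∧
        Dsig (n-1) g < ⊤ ∧ ∀ z ∈ ball (0:ℂ) 1, f z = α + (z - lam) * g z) ∧
    (∀ (α : ℂ) (g : ℂ → ℂ), DifferentiableOn ℂ g (ball (0:ℂ) 1) →
      Dsig (n-1) g < ⊤ → (∀ z ∈ ball (0:ℂ) 1, f z = α + (z - lam) * g z) →
      Dloc lam n f = Dsig (n-1) g) := by
  obtain ⟨m, rfl⟩ : ∃ m, n = m + 1 := ⟨n - 1, by omega⟩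
  rw [Nat.add_sub_cancel]
  have hm : (0:ℝ) < 1 / m.factorial := by have := m.factorial_pos; positivity
  have hpos1 : ∀ u : ℕ → ℂ, ∀ k, 0 ≤ cw m k * ‖u k‖ ^ 2 := fun u k => by
    have := cw_pos m k; positivity
  have hpos2 : ∀ u : ℕ → ℂ, ∀ N, 0 ≤ cw (m + 2) N * ‖pF (m + 1) u N‖ ^ 2 := fun u N => by
    have := cw_pos (m + 2) N; positivity
  have key : ∀ (α : ℂ) (g : ℂ → ℂ), DifferentiableOn ℂ g (ball (0:ℂ) 1) →
      Dsig m g < ⊤ → (∀ z ∈ ball (0:ℂ) 1, f z = α + (z - lam) * g z) →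
      Dloc lam (m + 1) f = Dsig m g := by
    intro α g hg hD hfg
    rw [Dsig_eq hlam] at hD
    have hs := (ofReal_mul_tsum_lt_top hm (hpos1 _)).1 hD
    have hsum := hasSum_pF m _ hs
    rw [Dloc_eq hlam m hf hg hfg, Dsig_eq hlam, ← ENNReal.ofReal_tsum_of_nonneg (hpos1 _) hs,
      ← ENNReal.ofReal_tsum_of_nonneg (hpos2 _) hsum.summable, hsum.tsum_eq]
  refine ⟨⟨fun hD => ?_, ?_⟩, key⟩
  · have hinv : DifferentiableOn ℂ (fun z => (z - lam)⁻¹) (ball (0:ℂ) 1) :=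
      DifferentiableOn.inv (by fun_prop) fun z hz => sub_ne hlam hz
    -- Start from `α = 0`, with quotient `f / (z - λ)`, and correct the constant afterwards.
    have hg0 : DifferentiableOn ℂ (fun z => f z * (z - lam)⁻¹) (ball (0:ℂ) 1) := hf.mul hinv
    rw [Dloc_eq hlam m hf hg0 (α := 0) (fun z hz => by
      field_simp [sub_ne hlam hz]; simp)] at hD
    obtain ⟨β, hβ⟩ := exists_shift m _ ((ofReal_mul_tsum_lt_top hm (hpos2 _)).1 hD)
    have hg1 : DifferentiableOn ℂ (fun z => (-β) * (z - lam)⁻¹) (ball (0:ℂ) 1) :=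
      hinv.const_mul _
    refine ⟨β, fun z => f z * (z - lam)⁻¹ + (-β) * (z - lam)⁻¹, hg0.add hg1, ?_, fun z hz => ?_⟩
    · rw [Dsig_eq hlam, ofReal_mul_tsum_lt_top hm (hpos1 _)]
      refine hβ.congr fun k => ?_
      congr 3
      simp only [useq]
      rw [coeff_add hg0 hg1, coeff_const_mul]
      linear_combination β * ((cw m k)⁻¹ : ℝ) * coeff_inv hlam (k + m)
    · have := sub_ne hlam hz
      field_simp
      ring
  · rintro ⟨α, g, hg, hD, hfg⟩
    rw [key α g hg hD hfg]
    exact hD
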